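/- arXiv:2305.04285 — 7 statements merged into one kernel-verified Lean document; each statement's English description precedes it below -/
import Mathlib

section
/- The subgroup G_I of GL(5,ℝ) generated by the three Minkowski reflections r_{i₀}, r_{i₁}, r_{i₂} is isomorphic to the symmetric group S₄; in particular it is finite of order 24. -/
noncomputable section

open Real

/-- The Minkowski bilinear form of signature (1,4) on `ℝ^5`. -/
def B (x y : Fin 5 → ℝ) : ℝ :=
  -(x 0 * y 0) + x 1 * y 1 + x 2 * y 2 + x 3 * y 3 + x 4 * y 4

/-- The Kerckhoff–Storm vector `t`. -/
def vt : Fin 5 → ℝ := ![Real.sqrt 2, 1, 1, 1, Real.sqrt 7]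
/-- The Kerckhoff–Storm vector `b`. -/
def vb : Fin 5 → ℝ := ![Real.sqrt 2, 1, 1, -1, -Real.sqrt 7]
/-- The Kerckhoff–Storm vector `u`. -/
def vu : Fin 5 → ℝ := ![Real.sqrt 2, 1, 1, 1, -(Real.sqrt 7 / 7)]
/-- The Kerckhoff–Storm vector `ℓ`. -/
def vl : Fin 5 → ℝ := ![Real.sqrt 2, 1, 1, -1, Real.sqrt 7 / 7]
/-- The Kerckhoff–Storm vector `c`. -/
def vc : Fin 5 → ℝ := ![1, Real.sqrt 2, 0, 0, 0]
/-- The Kerckhoff–Storm vector `i₀`. -/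
def vi0 : Fin 5 → ℝ := ![0, -1, 1, 0, 0]
/-- The Kerckhoff–Storm vector `i₁`. -/
def vi1 : Fin 5 → ℝ := ![0, 0, -1, -1, 0]
/-- The Kerckhoff–Storm vector `i₂`. -/
def vi2 : Fin 5 → ℝ := ![0, 0, -1, 1, 0]

/-- The Minkowski reflection along a vector `v` with `B v v ≠ 0`. -/
def mrefl (v : Fin 5 → ℝ) (x : Fin 5 → ℝ) : Fin 5 → ℝ :=
  x - (2 * (B x v / B v v)) • v

/-- The four vertices of the regular tetrahedron, in the coordinates `1, 2, 3` of `ℝ^5`, that the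
reflections along `vi0`, `vi1`, `vi2` permute. -/
def tetVertex : Fin 4 → Fin 5 → ℝ :=
  ![![0, 1, 1, 1, 0], ![0, 1, -1, -1, 0], ![0, -1, 1, -1, 0], ![0, -1, -1, 1, 0]]

/-- The pairing of a vector with the `k`-th vertex of the tetrahedron. -/
def tetCoord (k : Fin 4) : (Fin 5 → ℝ) →ₗ[ℝ] ℝ where
  toFun x := B x (tetVertex k)
  map_add' x y := by simp only [B, Pi.add_apply]; ring
  map_smul' a x := by simp only [B, Pi.smul_apply, smul_eq_mul, RingHom.id_apply]; ring

lemma tetCoord_apply (k : Fin 4) (x : Fin 5 → ℝ) : tetCoord k x = B x (tetVertex k) := rfl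

/-- The linear map that permutes the vertices of the tetrahedron by `σ` and fixes the
coordinates `0` and `4`. -/
def tetMap (σ : Equiv.Perm (Fin 4)) : Module.End ℝ (Fin 5 → ℝ) where
  toFun x := ![x 0, 0, 0, 0, x 4] + ∑ k, (tetCoord (σ⁻¹ k) x / 4) • tetVertex k
  map_add' x y := by
    ext j
    fin_cases j <;> simp [Fin.sum_univ_four, tetVertex] <;> ring
  map_smul' a x := by
    ext j
    fin_cases j <;> simp [Fin.sum_univ_four, tetVertex] <;> ring

lemma tetMap_apply (σ : Equiv.Perm (Fin 4)) (x : Fin 5 → ℝ) :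
    tetMap σ x = ![x 0, 0, 0, 0, x 4] + ∑ k, (tetCoord (σ⁻¹ k) x / 4) • tetVertex k := rfl

lemma tetMap_apply_zero (σ : Equiv.Perm (Fin 4)) (x : Fin 5 → ℝ) : tetMap σ x 0 = x 0 := by
  simp [tetMap_apply, Fin.sum_univ_four, tetVertex]

lemma tetMap_apply_four (σ : Equiv.Perm (Fin 4)) (x : Fin 5 → ℝ) : tetMap σ x 4 = x 4 := by
  simp [tetMap_apply, Fin.sum_univ_four, tetVertex]

lemma sum_tetCoord (x : Fin 5 → ℝ) : ∑ k, tetCoord k x = 0 := by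
  simp [tetCoord_apply, B, Fin.sum_univ_four, tetVertex]
  ring

lemma tetCoord_tetMap (σ : Equiv.Perm (Fin 4)) (m : Fin 4) (x : Fin 5 → ℝ) :
    tetCoord m (tetMap σ x) = tetCoord (σ⁻¹ m) x := by
  have h : ∑ k, tetCoord (σ⁻¹ k) x = 0 :=
    (Equiv.sum_comp σ⁻¹ (fun k => tetCoord k x)).trans (sum_tetCoord x)
  rw [Fin.sum_univ_four] at h
  rw [tetCoord_apply, tetMap_apply, Fin.sum_univ_four]
  fin_cases m <;> simp [B, tetVertex] at h ⊢ <;> linarith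

/-- The representation of `S₄` on `ℝ^5` by symmetries of the tetrahedron. -/
def tetRep : Equiv.Perm (Fin 4) →* Module.End ℝ (Fin 5 → ℝ) where
  toFun := tetMap
  map_one' := by
    refine LinearMap.ext fun x => funext fun j => ?_
    fin_cases j <;>
      simp [tetMap_apply, tetCoord_apply, B, Fin.sum_univ_four, tetVertex] <;> ring
  map_mul' σ τ := by
    refine LinearMap.ext fun x => ?_
    rw [Module.End.mul_apply, tetMap_apply, tetMap_apply σ]
    simp only [tetMap_apply_zero, tetMap_apply_four, tetCoord_tetMap, mul_inv_rev,
      Equiv.Perm.mul_apply]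

lemma tetCoord_tetVertex (i j : Fin 4) :
    tetCoord i (tetVertex j) = if i = j then 3 else -1 := by
  fin_cases i <;> fin_cases j <;> simp [tetCoord_apply, B, tetVertex] <;> norm_num

lemma tetRep_toHomUnits_injective : Function.Injective tetRep.toHomUnits := by
  rw [injective_iff_map_eq_one]
  intro σ hσ
  have h : tetMap σ = 1 := congrArg Units.val hσ
  refine Equiv.ext fun k => ?_
  have hk := tetCoord_tetMap σ (σ k) (tetVertex k)
  rw [h, Module.End.one_apply, ← Equiv.Perm.mul_apply, inv_mul_cancel, Equiv.Perm.one_apply,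
    tetCoord_tetVertex, tetCoord_tetVertex, if_pos rfl] at hk
  rw [Equiv.Perm.one_apply]
  by_contra hne
  rw [if_neg hne] at hk
  norm_num at hk

lemma tetMap_swap_zero_one (x : Fin 5 → ℝ) : tetMap (Equiv.swap 0 1) x = mrefl vi1 x := by
  ext j
  fin_cases j <;>
    simp [tetMap_apply, tetCoord_apply, B, Fin.sum_univ_four, tetVertex, mrefl, vi1,
      Equiv.swap_apply_def] <;> ring

lemma tetMap_swap_one_two (x : Fin 5 → ℝ) : tetMap (Equiv.swap 1 2) x = mrefl vi0 x := by
  ext j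
  fin_cases j <;>
    simp [tetMap_apply, tetCoord_apply, B, Fin.sum_univ_four, tetVertex, mrefl, vi0,
      Equiv.swap_apply_def] <;> ring

lemma tetMap_swap_two_three (x : Fin 5 → ℝ) : tetMap (Equiv.swap 2 3) x = mrefl vi2 x := by
  ext j
  fin_cases j <;>
    simp [tetMap_apply, tetCoord_apply, B, Fin.sum_univ_four, tetVertex, mrefl, vi2,
      Equiv.swap_apply_def] <;> ring

lemma closure_adjacent_swaps :
    Subgroup.closure {Equiv.swap 1 2, Equiv.swap 0 1, Equiv.swap 2 3} =
      (⊤ : Subgroup (Equiv.Perm (Fin 4))) := by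
  rw [← Subgroup.toSubmonoid_inj, Subgroup.top_toSubmonoid, eq_top_iff,
    ← Equiv.Perm.mclosure_swap_castSucc_succ 3, Submonoid.closure_le]
  rintro _ ⟨i, rfl⟩
  apply Subgroup.subset_closure
  fin_cases i <;> simp

/-- The subgroup of `GL(5,ℝ)` generated by the Minkowski reflections
`r_{i₀}, r_{i₁}, r_{i₂}` is isomorphic to the symmetric group `S₄`;
in particular it is finite of order 24. -/
theorem subgroup_GI_iso_S4 (g₀ g₁ g₂ : ((Fin 5 → ℝ) →ₗ[ℝ] (Fin 5 → ℝ))ˣ)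
    (h₀ : ∀ x, g₀.val x = mrefl vi0 x)
    (h₁ : ∀ x, g₁.val x = mrefl vi1 x)
    (h₂ : ∀ x, g₂.val x = mrefl vi2 x) :
    Nonempty ((Subgroup.closure {g₀, g₁, g₂} :
        Subgroup ((Fin 5 → ℝ) →ₗ[ℝ] (Fin 5 → ℝ))ˣ) ≃* Equiv.Perm (Fin 4)) ∧
      Nat.card (Subgroup.closure {g₀, g₁, g₂} :
        Subgroup ((Fin 5 → ℝ) →ₗ[ℝ] (Fin 5 → ℝ))ˣ) = 24 := by
  have e₀ : tetRep.toHomUnits (Equiv.swap 1 2) = g₀ :=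
    Units.ext (LinearMap.ext fun x => (tetMap_swap_one_two x).trans (h₀ x).symm)
  have e₁ : tetRep.toHomUnits (Equiv.swap 0 1) = g₁ :=
    Units.ext (LinearMap.ext fun x => (tetMap_swap_zero_one x).trans (h₁ x).symm)
  have e₂ : tetRep.toHomUnits (Equiv.swap 2 3) = g₂ :=
    Units.ext (LinearMap.ext fun x => (tetMap_swap_two_three x).trans (h₂ x).symm)
  have hrange : Subgroup.closure {g₀, g₁, g₂} = tetRep.toHomUnits.range := by
    rw [MonoidHom.range_eq_map, ← closure_adjacent_swaps, MonoidHom.map_closure,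
      Set.image_insert_eq, Set.image_pair, e₀, e₁, e₂]
  rw [hrange]
  have e := (MonoidHom.ofInjective tetRep_toHomUnits_injective).symm
  refine ⟨⟨e⟩, ?_⟩
  rw [Nat.card_congr e.toEquiv, Nat.card_perm, Nat.card_fin]
  rfl
end
end

section
/- The subgroup G_V of GL(5,ℝ) generated by the four Minkowski reflections r_{i₀}, r_{i₁}, r_{i₂}, r_t is isomorphic to the symmetric group S₅; in particular it is finite of order 120. -/
noncomputable section

open Real

/-- Five vectors permuted by the reflections in `i₂`, `i₀`, `i₁`, `t`: consecutive differences are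
multiples of these roots, and the sum is orthogonal to all of them. -/
def weightVec : Fin 5 → Fin 5 → ℝ :=
  ![![√7 + √2, -5, -5, 5, √2 + √7],
    ![√7 + √2, -5, 5, -5, √2 + √7],
    ![√7 + √2, 5, -5, -5, √2 + √7],
    ![√7 + √2, 5, 5, 5, √2 + √7],
    ![√7 - 4 * √2, 0, 0, 0, √2 - 4 * √7]]

lemma linearIndependent_weightVec : LinearIndependent ℝ weightVec := by
  have s2 : √2 * √2 = 2 := Real.mul_self_sqrt (by norm_num)
  have s7 : √7 * √7 = 7 := Real.mul_self_sqrt (by norm_num)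
  rw [Fintype.linearIndependent_iff]
  intro c hc
  have e0 := congrFun hc 0
  have e1 := congrFun hc 1
  have e2 := congrFun hc 2
  have e3 := congrFun hc 3
  have e4 := congrFun hc 4
  simp [weightVec, Fin.sum_univ_five] at e0 e1 e2 e3 e4
  have c1 : c 1 = c 0 := by linarith
  have c2 : c 2 = c 0 := by linarith
  have c3 : c 3 = c 0 := by linarith
  rw [c1, c2, c3] at e0 e4
  have a : 4 * c 0 + c 4 = 0 := by
    linear_combination (√7 * e0 - √2 * e4 - (4 * c 0 + c 4) * (s7 - s2)) / 5
  have b : c 0 - c 4 = 0 := by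
    linear_combination (√7 * e4 - √2 * e0 - (4 * c 0 - 4 * c 4) * (s7 - s2)) / 20
  have c0 : c 0 = 0 := by linarith
  have c4 : c 4 = 0 := by linarith
  intro i
  fin_cases i <;> simp [c0, c1, c2, c3, c4]

/-- The basis of `ℝ^5` formed by the vectors `weightVec`. -/
def weightBasis : Module.Basis (Fin 5) ℝ (Fin 5 → ℝ) :=
  basisOfLinearIndependentOfCardEqFinrank linearIndependent_weightVec (by simp)

lemma weightBasis_apply (i : Fin 5) : weightBasis i = weightVec i := by
  simp [weightBasis]

lemma mrefl_vi0_weightVec (i : Fin 5) :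
    mrefl vi0 (weightVec i) = weightVec (Equiv.swap 1 2 i) := by
  fin_cases i <;> ext k <;> fin_cases k <;>
    simp [mrefl, B, vi0, weightVec, Equiv.swap_apply_def] <;> norm_num

lemma mrefl_vi1_weightVec (i : Fin 5) :
    mrefl vi1 (weightVec i) = weightVec (Equiv.swap 2 3 i) := by
  fin_cases i <;> ext k <;> fin_cases k <;>
    simp [mrefl, B, vi1, weightVec, Equiv.swap_apply_def] <;> norm_num

lemma mrefl_vi2_weightVec (i : Fin 5) :
    mrefl vi2 (weightVec i) = weightVec (Equiv.swap 0 1 i) := by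
  fin_cases i <;> ext k <;> fin_cases k <;>
    simp [mrefl, B, vi2, weightVec, Equiv.swap_apply_def] <;> norm_num

lemma mrefl_vt_weightVec (i : Fin 5) :
    mrefl vt (weightVec i) = weightVec (Equiv.swap 3 4 i) := by
  have s2 : √2 * √2 = 2 := Real.mul_self_sqrt (by norm_num)
  have s7 : √7 * √7 = 7 := Real.mul_self_sqrt (by norm_num)
  have hB : B vt vt = 8 := by
    simp [B, vt]
    norm_num
  have hi : B (weightVec i) vt = ![0, 0, 0, 20, -20] i := by
    fin_cases i <;> simp [B, vt, weightVec] <;> linarith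
  rw [mrefl, hB, hi]
  fin_cases i <;> ext k <;> fin_cases k <;>
    simp [vt, weightVec, Equiv.swap_apply_def] <;> ring

/-- The action of permutations on a module by permuting a basis. -/
def permBasisHom {ι R M : Type*} [CommSemiring R] [AddCommMonoid M] [Module R M]
    (b : Module.Basis ι R M) : Equiv.Perm ι →* (M →ₗ[R] M)ˣ :=
  MonoidHom.toHomUnits
    { toFun := fun σ => b.constr R (b ∘ σ)
      map_one' := b.ext fun i => by simp
      map_mul' := fun σ τ => b.ext fun i => by simp }

lemma permBasisHom_apply {ι R M : Type*} [CommSemiring R] [AddCommMonoid M] [Module R M]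
    (b : Module.Basis ι R M) (σ : Equiv.Perm ι) (i : ι) :
    (permBasisHom b σ).val (b i) = b (σ i) := by
  simp [permBasisHom]

lemma permBasisHom_injective {ι R M : Type*} [CommSemiring R] [Nontrivial R] [AddCommMonoid M]
    [Module R M] (b : Module.Basis ι R M) : Function.Injective (permBasisHom b) := by
  intro σ τ h
  ext i
  apply b.injective
  rw [← permBasisHom_apply, h, permBasisHom_apply]

lemma closure_adjacent_swaps_fin_five :
    Subgroup.closure {Equiv.swap 1 2, Equiv.swap 2 3, Equiv.swap 0 1, Equiv.swap 3 4} =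
      (⊤ : Subgroup (Equiv.Perm (Fin 5))) := by
  rw [eq_top_iff, ← Subgroup.toSubmonoid_le, Subgroup.top_toSubmonoid,
    ← Equiv.Perm.mclosure_swap_castSucc_succ 4, Submonoid.closure_le]
  rintro _ ⟨i, rfl⟩
  apply Subgroup.subset_closure
  fin_cases i <;> simp

lemma eq_permBasisHom_weightBasis {g : ((Fin 5 → ℝ) →ₗ[ℝ] (Fin 5 → ℝ))ˣ} {v : Fin 5 → ℝ}
    {σ : Equiv.Perm (Fin 5)} (hg : ∀ x, g.val x = mrefl v x)
    (hv : ∀ i, mrefl v (weightVec i) = weightVec (σ i)) : g = permBasisHom weightBasis σ := by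
  refine Units.ext (weightBasis.ext fun i => ?_)
  rw [permBasisHom_apply, hg, weightBasis_apply, weightBasis_apply, hv]

/-- The subgroup of `GL(5,ℝ)` generated by the Minkowski reflections
`r_{i₀}, r_{i₁}, r_{i₂}, r_t` is isomorphic to the symmetric group `S₅`;
in particular it is finite of order 120. -/
theorem subgroup_GV_iso_S5 (g₀ g₁ g₂ gt : ((Fin 5 → ℝ) →ₗ[ℝ] (Fin 5 → ℝ))ˣ)
    (h₀ : ∀ x, g₀.val x = mrefl vi0 x)
    (h₁ : ∀ x, g₁.val x = mrefl vi1 x)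
    (h₂ : ∀ x, g₂.val x = mrefl vi2 x)
    (ht : ∀ x, gt.val x = mrefl vt x) :
    Nonempty ((Subgroup.closure {g₀, g₁, g₂, gt} :
        Subgroup ((Fin 5 → ℝ) →ₗ[ℝ] (Fin 5 → ℝ))ˣ) ≃* Equiv.Perm (Fin 5)) ∧
      Nat.card (Subgroup.closure {g₀, g₁, g₂, gt} :
        Subgroup ((Fin 5 → ℝ) →ₗ[ℝ] (Fin 5 → ℝ))ˣ) = 120 := by
  have hclosure : Subgroup.closure {g₀, g₁, g₂, gt} = (permBasisHom weightBasis).range := by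
    rw [MonoidHom.range_eq_map, ← closure_adjacent_swaps_fin_five, MonoidHom.map_closure,
      eq_permBasisHom_weightBasis h₀ mrefl_vi0_weightVec,
      eq_permBasisHom_weightBasis h₁ mrefl_vi1_weightVec,
      eq_permBasisHom_weightBasis h₂ mrefl_vi2_weightVec,
      eq_permBasisHom_weightBasis ht mrefl_vt_weightVec]
    simp only [Set.image_insert_eq, Set.image_singleton]
  rw [hclosure]
  have e := (MonoidHom.ofInjective (permBasisHom_injective weightBasis)).symm
  refine ⟨⟨e⟩, ?_⟩
  rw [Nat.card_congr e.toEquiv, Nat.card_perm, Nat.card_fin]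
  rfl
end
end

section
/- The subgroup G_{V'} of GL(5,ℝ) generated by the four Minkowski reflections r_{i₀}, r_{i₁}, r_{i₂}, r_b is isomorphic to the symmetric group S₅; in particular it is finite of order 120. -/
noncomputable section

open Real

/-- The coordinates in which the reflections in `vi1`, `vi0`, `vi2`, `vb` become the transpositions
of adjacent coordinates. -/
def coxeterCoord : (Fin 5 → ℝ) →ₗ[ℝ] (Fin 5 → ℝ) :=
  Matrix.toLin' !![-(3 / 2 * √2), -1 / 2, -1 / 2, -1 / 2, -(√7 / 2);
    -(3 / 2 * √2), -1 / 2, 1 / 2, 1 / 2, -(√7 / 2);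
    -(3 / 2 * √2), 1 / 2, -1 / 2, 1 / 2, -(√7 / 2);
    -(3 / 2 * √2), 1 / 2, 1 / 2, -1 / 2, -(√7 / 2);
    -√2, 0, 0, 0, 0]

theorem coxeterCoord_apply (x : Fin 5 → ℝ) : coxeterCoord x =
    ![-(3 / 2 * √2) * x 0 + (-x 1 - x 2 - x 3 - √7 * x 4) / 2,
      -(3 / 2 * √2) * x 0 + (-x 1 + x 2 + x 3 - √7 * x 4) / 2,
      -(3 / 2 * √2) * x 0 + (x 1 - x 2 + x 3 - √7 * x 4) / 2,
      -(3 / 2 * √2) * x 0 + (x 1 + x 2 - x 3 - √7 * x 4) / 2,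
      -√2 * x 0] := by
  ext k
  fin_cases k <;>
    simp [coxeterCoord, Matrix.mulVec, dotProduct, Fin.sum_univ_five] <;> ring

theorem coxeterCoord_injective : Function.Injective coxeterCoord := by
  rw [injective_iff_map_eq_zero]
  intro x hx
  rw [coxeterCoord_apply] at hx
  have e0 := congrFun hx 0
  have e1 := congrFun hx 1
  have e2 := congrFun hx 2
  have e3 := congrFun hx 3
  have e4 := congrFun hx 4
  simp at e0 e1 e2 e3 e4
  rw [e4] at e0 e1 e2 e3
  have h1 : x 1 = 0 := by linarith
  have h2 : x 2 = 0 := by linarith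
  have h3 : x 3 = 0 := by linarith
  have h4 : √7 * x 4 = 0 := by linarith
  have h7 : √7 ≠ 0 := by positivity
  have hx4 : x 4 = 0 := (mul_eq_zero.mp h4).resolve_left h7
  ext k
  fin_cases k <;> simp [e4, h1, h2, h3, hx4]

/-- `coxeterCoord` as a linear automorphism of `ℝ^5`. -/
def coxeterEquiv : (Fin 5 → ℝ) ≃ₗ[ℝ] (Fin 5 → ℝ) :=
  LinearEquiv.ofInjectiveEndo coxeterCoord coxeterCoord_injective

theorem coxeterEquiv_apply (x : Fin 5 → ℝ) : coxeterEquiv x = coxeterCoord x := rfl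

/-- The permutation representation of a symmetric group, conjugated by a linear automorphism. -/
def conjPermRep {ι R : Type*} [CommSemiring R] (e : (ι → R) ≃ₗ[R] (ι → R)) :
    Equiv.Perm ι →* ((ι → R) →ₗ[R] (ι → R))ˣ :=
  MonoidHom.toHomUnits
    { toFun := fun σ => e.symm.toLinearMap ∘ₗ LinearMap.funLeft R R ⇑σ⁻¹ ∘ₗ e.toLinearMap
      map_one' := by ext; simp
      map_mul' := fun σ τ => by
        refine LinearMap.ext fun x => ?_
        simp only [Module.End.mul_apply, LinearMap.comp_apply, LinearEquiv.coe_coe,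
          LinearEquiv.apply_symm_apply, mul_inv_rev]
        rfl }

theorem conjPermRep_apply {ι R : Type*} [CommSemiring R] (e : (ι → R) ≃ₗ[R] (ι → R))
    (σ : Equiv.Perm ι) (x : ι → R) :
    (conjPermRep e σ).val x = e.symm (e x ∘ ⇑σ⁻¹) := rfl

theorem conjPermRep_injective {ι R : Type*} [CommSemiring R] [Nontrivial R]
    (e : (ι → R) ≃ₗ[R] (ι → R)) : Function.Injective (conjPermRep e) := by
  classical
  intro σ τ h
  rw [← inv_inj]
  ext k
  have hk := conjPermRep_apply e σ (e.symm (Pi.single (σ⁻¹ k) 1))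
  rw [h, conjPermRep_apply, e.symm.injective.eq_iff, e.apply_symm_apply] at hk
  have := congrFun hk k
  simpa [Pi.single_apply, eq_comm] using this

theorem eq_conjPermRep_of_coord {ι R : Type*} [CommSemiring R] {e : (ι → R) ≃ₗ[R] (ι → R)}
    {g : ((ι → R) →ₗ[R] (ι → R))ˣ} {σ : Equiv.Perm ι}
    (h : ∀ x, e (g.val x) = e x ∘ ⇑σ⁻¹) : conjPermRep e σ = g := by
  refine Units.ext (LinearMap.ext fun x => ?_)
  rw [conjPermRep_apply, ← h, e.symm_apply_apply]

theorem coxeterEquiv_mrefl_vi1 (x : Fin 5 → ℝ) :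
    coxeterEquiv (mrefl vi1 x) = coxeterEquiv x ∘ ⇑(Equiv.swap (0 : Fin 5) 1)⁻¹ := by
  simp only [coxeterEquiv_apply, coxeterCoord_apply]
  ext k
  fin_cases k <;> simp [mrefl, B, vi1, Equiv.swap_apply_def] <;> ring

theorem coxeterEquiv_mrefl_vi0 (x : Fin 5 → ℝ) :
    coxeterEquiv (mrefl vi0 x) = coxeterEquiv x ∘ ⇑(Equiv.swap (1 : Fin 5) 2)⁻¹ := by
  simp only [coxeterEquiv_apply, coxeterCoord_apply]
  ext k
  fin_cases k <;> simp [mrefl, B, vi0, Equiv.swap_apply_def] <;> ring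

theorem coxeterEquiv_mrefl_vi2 (x : Fin 5 → ℝ) :
    coxeterEquiv (mrefl vi2 x) = coxeterEquiv x ∘ ⇑(Equiv.swap (2 : Fin 5) 3)⁻¹ := by
  simp only [coxeterEquiv_apply, coxeterCoord_apply]
  ext k
  fin_cases k <;> simp [mrefl, B, vi2, Equiv.swap_apply_def] <;> ring

theorem coxeterEquiv_mrefl_vb (x : Fin 5 → ℝ) :
    coxeterEquiv (mrefl vb x) = coxeterEquiv x ∘ ⇑(Equiv.swap (3 : Fin 5) 4)⁻¹ := by
  simp only [coxeterEquiv_apply, coxeterCoord_apply]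
  have s2 : √2 ^ 2 = 2 := Real.sq_sqrt (by norm_num)
  have s7 : √7 ^ 2 = 7 := Real.sq_sqrt (by norm_num)
  have hB : B vb vb = 8 := by simp [B, vb]; norm_num
  ext k
  fin_cases k <;> simp [mrefl, hB, Equiv.swap_apply_def] <;> simp [B, vb] <;> ring_nf <;>
    grind

/-- The subgroup of `GL(5,ℝ)` generated by the Minkowski reflections
`r_{i₀}, r_{i₁}, r_{i₂}, r_b` is isomorphic to the symmetric group `S₅`;
in particular it is finite of order 120. -/
theorem subgroup_GV'_iso_S5 (g₀ g₁ g₂ gb : ((Fin 5 → ℝ) →ₗ[ℝ] (Fin 5 → ℝ))ˣ)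
    (h₀ : ∀ x, g₀.val x = mrefl vi0 x)
    (h₁ : ∀ x, g₁.val x = mrefl vi1 x)
    (h₂ : ∀ x, g₂.val x = mrefl vi2 x)
    (hb : ∀ x, gb.val x = mrefl vb x) :
    Nonempty ((Subgroup.closure {g₀, g₁, g₂, gb} :
        Subgroup ((Fin 5 → ℝ) →ₗ[ℝ] (Fin 5 → ℝ))ˣ) ≃* Equiv.Perm (Fin 5)) ∧
      Nat.card (Subgroup.closure {g₀, g₁, g₂, gb} :
        Subgroup ((Fin 5 → ℝ) →ₗ[ℝ] (Fin 5 → ℝ))ˣ) = 120 := by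
  have hrange : (conjPermRep coxeterEquiv).range = Subgroup.closure {g₀, g₁, g₂, gb} := by
    have htop : Subgroup.closure
        (Set.range fun i : Fin 4 => Equiv.swap i.castSucc i.succ) = ⊤ := by
      refine eq_top_iff.mpr fun σ _ => Subgroup.le_closure_toSubmonoid _ ?_
      rw [Equiv.Perm.mclosure_swap_castSucc_succ]
      trivial
    rw [MonoidHom.range_eq_map, ← htop, MonoidHom.map_closure, ← Set.range_comp]
    congr 1
    have e₁ := eq_conjPermRep_of_coord fun x => (h₁ x).symm ▸ coxeterEquiv_mrefl_vi1 x
    have e₀ := eq_conjPermRep_of_coord fun x => (h₀ x).symm ▸ coxeterEquiv_mrefl_vi0 x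
    have e₂ := eq_conjPermRep_of_coord fun x => (h₂ x).symm ▸ coxeterEquiv_mrefl_vi2 x
    have eb := eq_conjPermRep_of_coord fun x => (hb x).symm ▸ coxeterEquiv_mrefl_vb x
    refine Set.Subset.antisymm ?_ ?_
    · rintro _ ⟨i, rfl⟩
      fin_cases i
      · exact .inr (.inl e₁)
      · exact .inl e₀
      · exact .inr (.inr (.inl e₂))
      · exact .inr (.inr (.inr eb))
    · rintro _ (rfl | rfl | rfl | rfl)
      exacts [⟨1, e₀⟩, ⟨0, e₁⟩, ⟨2, e₂⟩, ⟨3, eb⟩]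
  have e : Subgroup.closure {g₀, g₁, g₂, gb} ≃* Equiv.Perm (Fin 5) :=
    (MulEquiv.subgroupCongr hrange.symm).trans
      (MonoidHom.ofInjective (conjPermRep_injective coxeterEquiv)).symm
  refine ⟨⟨e⟩, ?_⟩
  rw [Nat.card_congr e.toEquiv, Nat.card_perm, Nat.card_fin]
  rfl
end
end

section
/- The Minkowski reflections along the eight Kerckhoff–Storm vectors satisfy the Coxeter relations prescribed by the Coxeter diagram of Γ: (r_x ∘ r_y)² = id for every pair (x,y) among (t,u), (t,ℓ), (t,c), (t,i₀), (t,i₂), (b,u), (b,ℓ), (b,c), (b,i₀), (b,i₁), (u,c), (u,i₀), (u,i₂), (ℓ,c), (ℓ,i₀), (ℓ,i₁), (c,i₁), (c,i₂), (i₁,i₂), and (r_t ∘ r_{i₁})³ = (r_b ∘ r_{i₂})³ = (r_{i₀} ∘ r_{i₁})³ = (r_{i₀} ∘ r_{i₂})³ = id. -/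
noncomputable section

open Real

/-- The reflection along `v` changes only the `v`-coefficient of `x + a • v + b • w`. -/
lemma mrefl_add_smul_add_smul {v : Fin 5 → ℝ} (hv : B v v ≠ 0) (w x : Fin 5 → ℝ) (a b : ℝ) :
    mrefl v (x + a • v + b • w) =
      x + (-a - 2 * B x v / B v v - b * (2 * B v w / B v v)) • v + b • w := by
  have h : B (x + a • v + b • w) v = B x v + a * B v v + b * B v w := by
    simp only [B, Pi.add_apply, Pi.smul_apply, smul_eq_mul]
    ring
  rw [mrefl, h]
  match_scalars <;> field_simp
  ring

lemma B_comm (v w : Fin 5 → ℝ) : B v w = B w v := by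
  simp only [B]
  ring

/-- The composition of two reflections acts affinely on the coefficients of
`x + a • v + b • w`. -/
lemma mrefl_mrefl_add_smul_add_smul {v w : Fin 5 → ℝ} (hv : B v v ≠ 0) (hw : B w w ≠ 0)
    (x : Fin 5 → ℝ) (a b : ℝ) :
    mrefl v (mrefl w (x + a • v + b • w)) =
      x + (-a - 2 * B x v / B v v -
          (-b - 2 * B x w / B w w - a * (2 * B v w / B w w)) * (2 * B v w / B v v)) • v +
        (-b - 2 * B x w / B w w - a * (2 * B v w / B w w)) • w := by
  rw [add_right_comm, mrefl_add_smul_add_smul hw, add_right_comm, mrefl_add_smul_add_smul hv,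
    B_comm w v]

/-- Reflections along orthogonal vectors have a product of order dividing 2. -/
lemma mrefl_comp_sq_eq_id {v w : Fin 5 → ℝ} (hv : B v v ≠ 0) (hw : B w w ≠ 0)
    (h : B v w = 0) : (mrefl v ∘ mrefl w) ∘ (mrefl v ∘ mrefl w) = id := by
  funext x
  have hx : x = x + (0 : ℝ) • v + (0 : ℝ) • w := by simp
  simp only [Function.comp_apply, id]
  conv_lhs => rw [hx]
  rw [mrefl_mrefl_add_smul_add_smul hv hw, mrefl_mrefl_add_smul_add_smul hv hw, h]
  match_scalars <;> ring

/-- Reflections along vectors at angle `π / 3` or `2 * π / 3` have a product of order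
dividing 3. -/
lemma mrefl_comp_cube_eq_id {v w : Fin 5 → ℝ} (hv : B v v ≠ 0) (hw : B w w ≠ 0)
    (h : 4 * B v w ^ 2 = B v v * B w w) :
    (mrefl v ∘ mrefl w) ∘ (mrefl v ∘ mrefl w) ∘ (mrefl v ∘ mrefl w) = id := by
  have hrs : (2 * B v w / B w w) * (2 * B v w / B v v) = 1 := by
    field_simp
    linear_combination h
  funext x
  have hx : x = x + (0 : ℝ) • v + (0 : ℝ) • w := by simp
  simp only [Function.comp_apply, id]
  conv_lhs => rw [hx]
  rw [mrefl_mrefl_add_smul_add_smul hv hw, mrefl_mrefl_add_smul_add_smul hv hw,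
    mrefl_mrefl_add_smul_add_smul hv hw]
  generalize 2 * B v w / B w w = r at *
  generalize 2 * B v w / B v v = s at *
  match_scalars <;> grind

/-- The Minkowski reflections along the eight Kerckhoff–Storm vectors satisfy the
Coxeter relations prescribed by the Coxeter diagram of `Γ`: the listed commuting pairs
give products of order dividing 2, and the listed `π/3`-pairs give products of order
dividing 3. -/
theorem kerckhoff_storm_coxeter_relations :
    (∀ p ∈ [(vt, vu), (vt, vl), (vt, vc), (vt, vi0), (vt, vi2),
            (vb, vu), (vb, vl), (vb, vc), (vb, vi0), (vb, vi1),
            (vu, vc), (vu, vi0), (vu, vi2),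
            (vl, vc), (vl, vi0), (vl, vi1),
            (vc, vi1), (vc, vi2), (vi1, vi2)],
      (mrefl p.1 ∘ mrefl p.2) ∘ (mrefl p.1 ∘ mrefl p.2) = id) ∧
    (∀ p ∈ [(vt, vi1), (vb, vi2), (vi0, vi1), (vi0, vi2)],
      (mrefl p.1 ∘ mrefl p.2) ∘ (mrefl p.1 ∘ mrefl p.2) ∘ (mrefl p.1 ∘ mrefl p.2) = id) := by
  have sq2 : √2 * √2 = (2 : ℝ) := Real.mul_self_sqrt (by norm_num)
  have sq7 : √7 * √7 = (7 : ℝ) := Real.mul_self_sqrt (by norm_num)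
  have ht : B vt vt = 8 := by simp [B, vt]; linarith
  have hb : B vb vb = 8 := by simp [B, vb]; linarith
  have hu : B vu vu = 8 / 7 := by simp [B, vu]; linarith
  have hl : B vl vl = 8 / 7 := by simp [B, vl]; linarith
  have hc : B vc vc = 1 := by simp [B, vc]; linarith
  have h0 : B vi0 vi0 = 2 := by simp [B, vi0]; norm_num
  have h1 : B vi1 vi1 = 2 := by simp [B, vi1]; norm_num
  have h2 : B vi2 vi2 = 2 := by simp [B, vi2]; norm_num
  constructor
  · simp only [List.forall_mem_cons, List.not_mem_nil, false_imp_iff, implies_true, and_true]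
    refine ⟨?_, ?_, ?_, ?_, ?_, ?_, ?_, ?_, ?_, ?_, ?_, ?_, ?_, ?_, ?_, ?_, ?_, ?_, ?_⟩ <;>
      refine mrefl_comp_sq_eq_id (by norm_num [*]) (by norm_num [*]) ?_ <;>
      simp [B, vt, vb, vu, vl, vc, vi0, vi1, vi2] <;> linarith
  · simp only [List.forall_mem_cons, List.not_mem_nil, false_imp_iff, implies_true, and_true]
    refine ⟨?_, ?_, ?_, ?_⟩ <;>
      refine mrefl_comp_cube_eq_id (by norm_num [*]) (by norm_num [*]) ?_ <;>
      simp only [ht, hb, h0, h1, h2] <;>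
      simp [B, vt, vb, vi0, vi1, vi2] <;> norm_num
end
end

section
/- Each of the three compositions r_t ∘ r_b, r_u ∘ r_ℓ and r_c ∘ r_{i₀} has infinite order in GL(5,ℝ) (these are parabolic isometries of ℍ⁴, since the corresponding pairs of bounding hyperplanes of Q are tangent at infinity). -/
noncomputable section

open Real

theorem B_add_left (x y z : Fin 5 → ℝ) : B (x + y) z = B x z + B y z := by
  simp only [B, Pi.add_apply]; ring

theorem B_smul_left (a : ℝ) (x y : Fin 5 → ℝ) : B (a • x) y = a * B x y := by
  simp only [B, Pi.smul_apply, smul_eq_mul]; ring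

theorem B_sub_left (x y z : Fin 5 → ℝ) : B (x - y) z = B x z - B y z := by
  simp only [B, Pi.sub_apply]; ring

theorem B_comm_s11 (x y : Fin 5 → ℝ) : B x y = B y x := by
  simp only [B]; ring

/-- If `v` and `w` span a degenerate plane with null direction `e = v - (B v w / B w w) • w`, then
`r_v ∘ r_w` translates `v` along `e`. -/
theorem mrefl_comp_iterate_apply {v w : Fin 5 → ℝ} (hv : B v v ≠ 0) (hw : B w w ≠ 0)
    (h : B v w ^ 2 = B v v * B w w) (n : ℕ) :
    (mrefl v ∘ mrefl w)^[n] v = v + (2 * n : ℝ) • (v - (B v w / B w w) • w) := by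
  induction n with
  | zero => simp
  | succ n ih =>
    rw [Function.iterate_succ_apply', ih]
    have hev : B (v - (B v w / B w w) • w) v = 0 := by
      rw [B_sub_left, B_smul_left, B_comm_s11 w v]
      field_simp
      linear_combination -h
    have hew : B (v - (B v w / B w w) • w) w = 0 := by
      rw [B_sub_left, B_smul_left]
      field_simp
      ring
    have hcoef : B v w / B w w * (B v w / B v v) = 1 := by
      field_simp
      linear_combination h
    simp only [Function.comp_apply, mrefl]
    rw [B_sub_left (v + _) _ v, B_smul_left _ w v, B_add_left, B_add_left, B_smul_left, B_smul_left,
      hev, hew, B_comm_s11 w v]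
    ext i
    simp only [Pi.add_apply, Pi.sub_apply, Pi.smul_apply, smul_eq_mul, mul_zero, add_zero, sub_div,
      div_self hv]
    push_cast
    linear_combination (4 * v i) * hcoef

/-- The product of the reflections in two distinct hyperplanes tangent at infinity has infinite
order. -/
theorem mrefl_comp_iterate_ne_id {v w : Fin 5 → ℝ} (hv : B v v ≠ 0) (hw : B w w ≠ 0)
    (h : B v w ^ 2 = B v v * B w w) (hvw : v ≠ (B v w / B w w) • w) {n : ℕ} (hn : n ≠ 0) :
    (mrefl v ∘ mrefl w)^[n] ≠ id := by
  intro hid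
  have key := mrefl_comp_iterate_apply hv hw h n
  rw [hid, id, left_eq_add, smul_eq_zero, sub_eq_zero] at key
  exact key.elim (by simpa using hn) hvw

theorem B_vt_vt : B vt vt = 8 := by
  simp [B, vt]; norm_num

theorem B_vb_vb : B vb vb = 8 := by
  simp [B, vb]; norm_num

theorem B_vt_vb : B vt vb = -8 := by
  simp [B, vt, vb]; norm_num

theorem B_vu_vu : B vu vu = 8 / 7 := by
  simp [B, vu, div_mul_div_comm]; norm_num

theorem B_vl_vl : B vl vl = 8 / 7 := by
  simp [B, vl, div_mul_div_comm]; norm_num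

theorem B_vu_vl : B vu vl = -8 / 7 := by
  simp [B, vu, vl, div_mul_div_comm]; norm_num

theorem B_vc_vc : B vc vc = 1 := by
  simp [B, vc]; norm_num

theorem B_vi0_vi0 : B vi0 vi0 = 2 := by
  simp [B, vi0]; norm_num

theorem B_vc_vi0 : B vc vi0 = -√2 := by
  simp [B, vc, vi0]

/-- Each of `r_t ∘ r_b`, `r_u ∘ r_ℓ` and `r_c ∘ r_{i₀}` has infinite order:
no positive iterate is the identity (these are parabolic isometries of `ℍ⁴`). -/
theorem kerckhoff_storm_parabolic_pairs_infinite_order :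
    ∀ p ∈ [(vt, vb), (vu, vl), (vc, vi0)],
      ∀ n : ℕ, n ≠ 0 → (mrefl p.1 ∘ mrefl p.2)^[n] ≠ id := by
  have hsqrt : (0 : ℝ) < √2 := by positivity
  intro p hp n hn
  simp only [List.mem_cons, List.not_mem_nil, or_false] at hp
  rcases hp with rfl | rfl | rfl
  · refine mrefl_comp_iterate_ne_id ?_ ?_ ?_ (fun h => ?_) hn
    · norm_num [B_vt_vt]
    · norm_num [B_vb_vb]
    · norm_num [B_vt_vt, B_vb_vb, B_vt_vb]
    · have h0 := congrFun h 0
      norm_num [B_vb_vb, B_vt_vb] at h0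
      simp [vt, vb] at h0
      linarith
  · refine mrefl_comp_iterate_ne_id ?_ ?_ ?_ (fun h => ?_) hn
    · norm_num [B_vu_vu]
    · norm_num [B_vl_vl]
    · norm_num [B_vu_vu, B_vl_vl, B_vu_vl]
    · have h0 := congrFun h 0
      norm_num [B_vl_vl, B_vu_vl] at h0
      simp [vu, vl] at h0
      linarith
  · refine mrefl_comp_iterate_ne_id ?_ ?_ ?_ (fun h => ?_) hn
    · norm_num [B_vc_vc]
    · norm_num [B_vi0_vi0]
    · norm_num [B_vc_vc, B_vi0_vi0, B_vc_vi0]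
    · have h0 := congrFun h 0
      simp [vc, vi0] at h0
end
end

section
/- The subgroup Γ of GL(5,ℝ) generated by the eight Minkowski reflections r_t, r_b, r_u, r_ℓ, r_c, r_{i₀}, r_{i₁}, r_{i₂} is infinite. -/
noncomputable section

open Real

/-- If `B v v = B w w = -B v w ≠ 0`, the product of the reflections along `v` and `w` is a
parabolic map translating `v` by `2 • (v + w)`. -/
theorem mrefl_mrefl_of_parallel {v w : Fin 5 → ℝ} (hv : B v v ≠ 0) (hw : B w w = B v v)
    (hvw : B v w = -B v v) : mrefl v (mrefl w v) = v + (2 : ℝ) • (v + w) := by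
  have h1 : mrefl w v = v + (2 : ℝ) • w := by
    simp only [mrefl, hvw, hw, neg_div, div_self hv]
    module
  have h2 : B (v + (2 : ℝ) • w) v = -B v v := by
    simp only [B, Pi.add_apply, Pi.smul_apply, smul_eq_mul] at hvw ⊢
    linarith
  rw [h1, mrefl, h2, neg_div, div_self hv]
  module

/-- The product of the reflections along `v` and `w` fixes every vector `B`-orthogonal to both. -/
theorem mrefl_mrefl_of_orthogonal {v w x : Fin 5 → ℝ} (hv : B x v = 0) (hw : B x w = 0) :
    mrefl v (mrefl w x) = x := by
  simp [mrefl, hv, hw]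

theorem B_vt_add_vb_vt : B (vt + vb) vt = 0 := by
  have h := B_vt_vt
  have h' := B_vt_vb
  simp only [B, Pi.add_apply] at *
  linarith

theorem B_vt_add_vb_vb : B (vt + vb) vb = 0 := by
  have h := B_vb_vb
  have h' := B_vt_vb
  simp only [B, Pi.add_apply] at *
  linarith

/-- The subgroup of `GL(5,ℝ)` generated by the eight Minkowski reflections
`r_t, r_b, r_u, r_ℓ, r_c, r_{i₀}, r_{i₁}, r_{i₂}` is infinite. -/
theorem reflection_group_Gamma_infinite
    (gt gb gu gl gc g₀ g₁ g₂ : ((Fin 5 → ℝ) →ₗ[ℝ] (Fin 5 → ℝ))ˣ)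
    (ht : ∀ x, gt.val x = mrefl vt x)
    (hb : ∀ x, gb.val x = mrefl vb x)
    (hu : ∀ x, gu.val x = mrefl vu x)
    (hl : ∀ x, gl.val x = mrefl vl x)
    (hc : ∀ x, gc.val x = mrefl vc x)
    (h₀ : ∀ x, g₀.val x = mrefl vi0 x)
    (h₁ : ∀ x, g₁.val x = mrefl vi1 x)
    (h₂ : ∀ x, g₂.val x = mrefl vi2 x) :
    Infinite (Subgroup.closure {gt, gb, gu, gl, gc, g₀, g₁, g₂} :
      Subgroup ((Fin 5 → ℝ) →ₗ[ℝ] (Fin 5 → ℝ))ˣ) := by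
  have hpow : ∀ k : ℕ, ((gt * gb) ^ k).val vt = vt + (2 * k : ℝ) • (vt + vb) := by
    intro k
    induction k with
    | zero => simp
    | succ k ih =>
      have hmul : ∀ x, (gt * gb).val x = mrefl vt (mrefl vb x) := fun x => by
        rw [Units.val_mul, Module.End.mul_apply, hb, ht]
      rw [pow_succ', Units.val_mul, Module.End.mul_apply, ih, map_add, map_smul, hmul, hmul,
        mrefl_mrefl_of_parallel (by rw [B_vt_vt]; norm_num) (by rw [B_vt_vt, B_vb_vb])
          (by rw [B_vt_vt, B_vt_vb]),
        mrefl_mrefl_of_orthogonal B_vt_add_vb_vt B_vt_add_vb_vb]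
      push_cast
      module
  have hmem : ∀ k : ℕ, (gt * gb) ^ k ∈ Subgroup.closure {gt, gb, gu, gl, gc, g₀, g₁, g₂} :=
    fun k => pow_mem (mul_mem (Subgroup.subset_closure (by simp))
      (Subgroup.subset_closure (by simp))) k
  refine Infinite.of_injective (fun k : ℕ => ⟨(gt * gb) ^ k, hmem k⟩) fun m n hmn => ?_
  have h : (gt * gb) ^ m = (gt * gb) ^ n := congrArg Subtype.val hmn
  have h0 := congrFun ((hpow m).symm.trans ((congrArg (fun g => g.val vt) h).trans (hpow n))) 0
  have hne : (√2 + √2 : ℝ) ≠ 0 := by positivity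
  simpa [vt, vb, hne] using h0
end
end

section
/- The matrix A is congruent over ℝ to diag(1, 1, 1, 1, -1): there exists an invertible 5×5 real matrix P with Pᵀ · A · P = diag(1, 1, 1, 1, -1). Equivalently, the quadratic form with matrix A has signature (4,1), i.e., it is a quadratic form of hyperbolic (Lorentzian) signature over ℚ. -/
noncomputable section

/-- The matrix over `ℚ` of the quadratic form associated to the arithmetic reflection
group `Γ` of the Kerckhoff–Storm Coxeter polytope `Q`. -/
def A : Matrix (Fin 5) (Fin 5) ℚ :=
  !![7, 0, 0, 7/2, 0;
     0, 1, -1, 0, 0;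
     0, -1, 1, -1/2, -1/2;
     7/2, 0, -1/2, 1, 0;
     0, 0, -1/2, 0, 1]

/-- The matrix `A` is congruent over `ℝ` to `diag(1,1,1,1,-1)`: the associated quadratic
form has hyperbolic (Lorentzian) signature `(4,1)`. -/
theorem A_congruent_to_lorentzian_diagonal :
    ∃ P : Matrix (Fin 5) (Fin 5) ℝ, IsUnit P ∧
      P.transpose * (A.map (Rat.cast : ℚ → ℝ)) * P =
        Matrix.diagonal ![1, 1, 1, 1, -1] := by
  obtain ⟨s, hs⟩ : ∃ s : ℝ, 7 * (s * s) = 1 :=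
    ⟨√(1 / 7), by rw [Real.mul_self_sqrt (by norm_num)]; norm_num⟩
  let P : Matrix (Fin 5) (Fin 5) ℝ :=
    !![s, 0, 0, -1, 0;
       0, 1, 0, -4, 2;
       0, 0, 0, -4, 2;
       0, 0, 0, 2, 0;
       0, 0, 1, -2, 1]
  have hP : P.transpose * (A.map (Rat.cast : ℚ → ℝ)) * P =
      Matrix.diagonal ![1, 1, 1, 1, -1] := by
    ext i j
    fin_cases i <;> fin_cases j <;>
      simp [P, A, Matrix.mul_apply, Fin.sum_univ_five] <;> grind
  refine ⟨P, .of_mul_eq_one_right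
    (Matrix.diagonal ![1, 1, 1, 1, -1] * (P.transpose * A.map (Rat.cast : ℚ → ℝ))) ?_, hP⟩
  rw [Matrix.mul_assoc, hP, Matrix.diagonal_mul_diagonal, ← Matrix.diagonal_one]
  congr 1
  ext i
  fin_cases i <;> simp
end
end
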